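/- arXiv:1405.6196 — 5 statements merged into one kernel-verified Lean document; each statement's English description precedes it below -/
import Mathlib

section
/- If W + c₁ < w, then Γ₁(1, 1) > 0. -/
/-!
Quotient rule gives `∂b̃/∂τ (0, 1, 1) = W + c₁ - w`, which is negative by hypothesis. Since the
derivative is continuous in `τ`, it stays negative on some `[0, δ)`, so no point of that interval
satisfies the condition `∂b̃/∂τ ≥ 0` in the definition of `Γ₁`, and `Γ₁(1, 1) ≥ δ > 0`.
-/

open Real ENNReal

noncomputable def f₁ (w θ η W c₁ c₂ τ b₀ ε₀ : ℝ) : ℝ :=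
  b₀ + W * ε₀ / (w + θ) * (Real.exp ((w + θ) * τ) - 1) +
    (c₁ - c₂) / w * (Real.exp (w * τ) - 1) +
    c₂ / (w + η) * (Real.exp ((w + η) * τ) - 1)

noncomputable def f₂ (w τ : ℝ) : ℝ := Real.exp (w * τ)

/-- The comparison function `b̃` of Lemma 1. -/
noncomputable def btilde (w θ η W c₁ c₂ τ b₀ ε₀ : ℝ) : ℝ :=
  f₁ w θ η W c₁ c₂ τ b₀ ε₀ / f₂ w τ

/-- `Γ₁(b₀, ε₀)`: the infimum in `[0, ∞]` of the set
`{τ ≥ 0 : b̃(τ, b₀, ε₀) = 1 and (∂/∂τ)b̃(τ, b₀, ε₀) ≥ 0}` (`∞` if the set is empty). -/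
noncomputable def Γ₁ (w θ η W c₁ c₂ b₀ ε₀ : ℝ) : ℝ≥0∞ :=
  sInf {x : ℝ≥0∞ | ∃ τ : ℝ, 0 ≤ τ ∧ x = ENNReal.ofReal τ ∧
    btilde w θ η W c₁ c₂ τ b₀ ε₀ = 1 ∧
    0 ≤ deriv (fun s => btilde w θ η W c₁ c₂ s b₀ ε₀) τ}

/-- The `τ`-derivative of `b̃(·, 1, 1)`, in quotient-rule form. -/
lemma hasDerivAt_btilde_one_one (w θ η W c₁ c₂ : ℝ) (hw : 0 < w) (hθ : 0 < θ) (hη : 0 < η)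
    (τ : ℝ) :
    HasDerivAt (fun s => btilde w θ η W c₁ c₂ s 1 1)
      (((W * Real.exp ((w + θ) * τ) + (c₁ - c₂) * Real.exp (w * τ)
          + c₂ * Real.exp ((w + η) * τ)) * f₂ w τ
        - f₁ w θ η W c₁ c₂ τ 1 1 * (w * f₂ w τ)) / f₂ w τ ^ 2) τ := by
  have hexp : ∀ a : ℝ, HasDerivAt (fun s => Real.exp (a * s)) (a * Real.exp (a * τ)) τ := by
    intro a
    have h := ((hasDerivAt_id τ).const_mul a).exp
    simpa [mul_comm] using h
  have hf₁ : HasDerivAt (fun s => f₁ w θ η W c₁ c₂ s 1 1)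
      (W * Real.exp ((w + θ) * τ) + (c₁ - c₂) * Real.exp (w * τ)
        + c₂ * Real.exp ((w + η) * τ)) τ := by
    have h := (((((hexp (w + θ)).sub_const 1).const_mul (W * 1 / (w + θ))).const_add 1).add
      (((hexp w).sub_const 1).const_mul ((c₁ - c₂) / w))).add
      (((hexp (w + η)).sub_const 1).const_mul (c₂ / (w + η)))
    have hwθ : w + θ ≠ 0 := by positivity
    have hwη : w + η ≠ 0 := by positivity
    refine h.congr_deriv ?_
    field_simp
  exact hf₁.div (hexp w) (Real.exp_ne_zero _)

/-- Lemma 2(i): `Γ₁(1,1) > 0` under assumption (13). -/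
theorem stmt_7 (w θ η W c₁ c₂ : ℝ) (hw : 0 < w) (hθ : 0 < θ) (hη : 0 < η)
    (hW : 0 < W) (hc₁ : 0 ≤ c₁) (hc₂ : 0 ≤ c₂) (hWc : W + c₁ < w) :
    0 < Γ₁ w θ η W c₁ c₂ 1 1 := by
  have hcont : Continuous (deriv (fun s => btilde w θ η W c₁ c₂ s 1 1)) := by
    rw [funext fun τ => (hasDerivAt_btilde_one_one w θ η W c₁ c₂ hw hθ hη τ).deriv]
    unfold f₁ f₂
    exact Continuous.div (by fun_prop) (by fun_prop) fun τ => by positivity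
  have hneg : deriv (fun s => btilde w θ η W c₁ c₂ s 1 1) 0 < 0 := by
    rw [(hasDerivAt_btilde_one_one w θ η W c₁ c₂ hw hθ hη 0).deriv]
    simp only [f₁, f₂, mul_zero, Real.exp_zero]
    linarith
  obtain ⟨δ, hδ, hball⟩ := Metric.eventually_nhds_iff.mp
    (hcont.continuousAt.eventually_lt continuousAt_const hneg)
  refine (ENNReal.ofReal_pos.mpr hδ).trans_le (le_sInf ?_)
  rintro x ⟨τ, hτ, rfl, -, hderiv⟩
  refine ENNReal.ofReal_le_ofReal (not_lt.mp fun hlt => ?_)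
  exact absurd (hball (by rwa [Real.dist_0_eq_abs, abs_of_nonneg hτ])) (not_lt.mpr hderiv)
end

section
/- If 0 ≤ b₀ ≤ b₁ ≤ 1 and 0 ≤ ε₀ ≤ ε₁, then Γ₁(b₀, ε₀) ≥ Γ₁(b₁, ε₁) (as elements of [0, ∞]). In particular, for every b₀ ∈ [0, 1] and every ε₀ ≥ 0, Γ₁(b₀, ε₀) ≥ Γ₁(1, ε₀). -/
/-!
Write `g₀, g₁` for `b̃` at the parameters `(b₀, ε₀)` and `(b₁, ε₁)`; then `g₀ ≤ g₁` on `[0, ∞)`.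
If `τ ≥ 0` is admissible for `g₀`, then `g₁ τ ≥ 1`, and some `t ∈ [0, τ]` is admissible for `g₁`:

* if `g₁ s < 1` for some `s ∈ [0, τ]`, take the first `t ≥ s` with `g₁ t ≥ 1`
  (`exists_upcrossing`);
* otherwise `g₁ ≥ 1` on `[0, τ]`, so `g₁ 0 = b₁ = 1` is a minimum there and `t = 0` works when
  `0 < τ`. When `τ = 0`, `g₁ - g₀` is minimal at `0` on `[0, ∞)`, so `g₁' 0 ≥ g₀' 0 ≥ 0`.
-/

open Real ENNReal

theorem deriv_nonneg_of_min_right {g : ℝ → ℝ} {d a c : ℝ} (hg : HasDerivAt g d a) (hac : a < c)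
    (h : ∀ x ∈ Set.Ioo a c, g a ≤ g x) : 0 ≤ d := by
  have ht : Filter.Tendsto (slope g a) (nhdsWithin a (Set.Ioi a)) (nhds d) :=
    (hasDerivAt_iff_tendsto_slope.1 hg).mono_left
      (nhdsWithin_mono a fun x hx => ne_of_gt hx)
  refine ge_of_tendsto ht ?_
  filter_upwards [Ioo_mem_nhdsGT hac] with x hx
  rw [slope_def_field]
  exact div_nonneg (sub_nonneg.2 (h x hx)) (sub_nonneg.2 hx.1.le)

theorem deriv_nonneg_of_max_left {g : ℝ → ℝ} {d a c : ℝ} (hg : HasDerivAt g d a) (hca : c < a)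
    (h : ∀ x ∈ Set.Ioo c a, g x ≤ g a) : 0 ≤ d := by
  have ht : Filter.Tendsto (slope g a) (nhdsWithin a (Set.Iio a)) (nhds d) :=
    (hasDerivAt_iff_tendsto_slope.1 hg).mono_left
      (nhdsWithin_mono a fun x hx => ne_of_lt hx)
  refine ge_of_tendsto ht ?_
  filter_upwards [Ioo_mem_nhdsLT hca] with x hx
  rw [slope_def_field]
  exact div_nonneg_of_nonpos (sub_nonpos.2 (h x hx)) (sub_nonpos.2 hx.2.le)

/-- A differentiable function passing from below level `1` to at least `1` attains the value `1`
with nonnegative derivative, namely at the first point where it is at least `1`. -/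
theorem exists_upcrossing {g : ℝ → ℝ} (hg : Differentiable ℝ g) {s τ : ℝ} (hsτ : s ≤ τ)
    (hs : g s < 1) (hτ : 1 ≤ g τ) : ∃ t ∈ Set.Icc s τ, g t = 1 ∧ 0 ≤ deriv g t := by
  have hK : IsCompact (Set.Icc s τ ∩ g ⁻¹' Set.Ici 1) :=
    isCompact_Icc.inter_right (isClosed_Ici.preimage hg.continuous)
  obtain ⟨t, ⟨htI, ht1⟩, hmin⟩ := hK.exists_isLeast ⟨τ, ⟨hsτ, le_rfl⟩, hτ⟩
  have ht1 : 1 ≤ g t := ht1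
  have hbelow : ∀ x, s ≤ x → x < t → g x < 1 := by
    intro x hsx hxt
    by_contra hx
    exact absurd (hmin ⟨⟨hsx, hxt.le.trans htI.2⟩, not_lt.1 hx⟩) (not_le.2 hxt)
  -- By the intermediate value theorem the value `1` is attained on `[s, t]`, hence at `t`.
  have hgt : g t = 1 := by
    obtain ⟨x, hx, hx1⟩ :=
      intermediate_value_Icc htI.1 hg.continuous.continuousOn ⟨hs.le, ht1⟩
    rcases hx.2.lt_or_eq with h | h
    · exact absurd hx1 (hbelow x hx.1 h).ne
    · rw [← h, hx1]
  have hst : s < t := lt_of_le_of_ne htI.1 (by rintro rfl; linarith)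
  refine ⟨t, htI, hgt, deriv_nonneg_of_max_left (hg t).hasDerivAt hst fun x hx => ?_⟩
  rw [hgt]
  exact (hbelow x hx.1.le hx.2).le

theorem btilde_differentiable (w θ η W c₁ c₂ b ε : ℝ) :
    Differentiable ℝ (fun s => btilde w θ η W c₁ c₂ s b ε) := by
  unfold btilde f₁ f₂
  intro s
  exact DifferentiableAt.div (by fun_prop) (by fun_prop) (Real.exp_pos _).ne'

theorem btilde_zero (w θ η W c₁ c₂ b ε : ℝ) : btilde w θ η W c₁ c₂ 0 b ε = b := by
  simp [btilde, f₁, f₂]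

theorem btilde_mono {w θ W : ℝ} (η c₁ c₂ : ℝ) (hw : 0 < w) (hθ : 0 < θ) (hW : 0 < W)
    {τ b₀ b₁ ε₀ ε₁ : ℝ} (hτ : 0 ≤ τ) (hb : b₀ ≤ b₁) (hε : ε₀ ≤ ε₁) :
    btilde w θ η W c₁ c₂ τ b₀ ε₀ ≤ btilde w θ η W c₁ c₂ τ b₁ ε₁ := by
  have hexp : 0 ≤ Real.exp ((w + θ) * τ) - 1 :=
    sub_nonneg.2 (Real.one_le_exp (by positivity))
  unfold btilde f₁ f₂
  gcongr

/-- For every time `τ` admissible for `(b₀, ε₀)`, some time `t ∈ [0, τ]` is admissible for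
`(b₁, ε₁)`. -/
theorem exists_admissible_le {w θ W : ℝ} (η c₁ c₂ : ℝ) (hw : 0 < w) (hθ : 0 < θ) (hW : 0 < W)
    {τ b₀ b₁ ε₀ ε₁ : ℝ} (hτ : 0 ≤ τ) (hb : b₀ ≤ b₁) (hb₁ : b₁ ≤ 1) (hε : ε₀ ≤ ε₁)
    (h1 : btilde w θ η W c₁ c₂ τ b₀ ε₀ = 1)
    (hd : 0 ≤ deriv (fun s => btilde w θ η W c₁ c₂ s b₀ ε₀) τ) :
    ∃ t, 0 ≤ t ∧ t ≤ τ ∧ btilde w θ η W c₁ c₂ t b₁ ε₁ = 1 ∧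
      0 ≤ deriv (fun s => btilde w θ η W c₁ c₂ s b₁ ε₁) t := by
  have hdiff₀ := btilde_differentiable w θ η W c₁ c₂ b₀ ε₀
  have hdiff₁ := btilde_differentiable w θ η W c₁ c₂ b₁ ε₁
  have hτ1 : 1 ≤ btilde w θ η W c₁ c₂ τ b₁ ε₁ :=
    h1.symm.le.trans (btilde_mono η c₁ c₂ hw hθ hW hτ hb hε)
  by_cases hs : ∃ s ∈ Set.Icc 0 τ, btilde w θ η W c₁ c₂ s b₁ ε₁ < 1
  · obtain ⟨s, hs, hs1⟩ := hs
    obtain ⟨t, ht, ht1, htd⟩ := exists_upcrossing hdiff₁ hs.2 hs1 hτ1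
    exact ⟨t, hs.1.trans ht.1, ht.2, ht1, htd⟩
  · push Not at hs
    have h01 : btilde w θ η W c₁ c₂ 0 b₁ ε₁ = 1 :=
      le_antisymm ((btilde_zero ..).trans_le hb₁) (hs 0 ⟨le_rfl, hτ⟩)
    refine ⟨0, le_rfl, hτ, h01, ?_⟩
    rcases hτ.eq_or_lt with rfl | hpos
    · have hD := (hdiff₁ 0).hasDerivAt.sub (hdiff₀ 0).hasDerivAt
      have := deriv_nonneg_of_min_right hD one_pos fun x hx => by
        simp only [Pi.sub_apply, h01, h1, sub_self]
        exact sub_nonneg.2 (btilde_mono η c₁ c₂ hw hθ hW hx.1.le hb hε)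
      linarith
    · exact deriv_nonneg_of_min_right (hdiff₁ 0).hasDerivAt hpos fun x hx =>
        h01.le.trans (hs x ⟨hx.1.le, hx.2.le⟩)

/-- Lemma 2(ii): monotonicity of `Γ₁`. -/
theorem stmt_8 (w θ η W c₁ c₂ : ℝ) (hw : 0 < w) (hθ : 0 < θ) (hη : 0 < η)
    (hW : 0 < W) (hc₁ : 0 ≤ c₁) (hc₂ : 0 ≤ c₂) :
    (∀ b₀ b₁ ε₀ ε₁ : ℝ, 0 ≤ b₀ → b₀ ≤ b₁ → b₁ ≤ 1 → 0 ≤ ε₀ → ε₀ ≤ ε₁ →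
      Γ₁ w θ η W c₁ c₂ b₁ ε₁ ≤ Γ₁ w θ η W c₁ c₂ b₀ ε₀) ∧
    ∀ b₀ ε₀ : ℝ, b₀ ∈ Set.Icc (0 : ℝ) 1 → 0 ≤ ε₀ →
      Γ₁ w θ η W c₁ c₂ 1 ε₀ ≤ Γ₁ w θ η W c₁ c₂ b₀ ε₀ := by
  have key : ∀ b₀ b₁ ε₀ ε₁ : ℝ, b₀ ≤ b₁ → b₁ ≤ 1 → ε₀ ≤ ε₁ →
      Γ₁ w θ η W c₁ c₂ b₁ ε₁ ≤ Γ₁ w θ η W c₁ c₂ b₀ ε₀ := by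
    intro b₀ b₁ ε₀ ε₁ hb hb₁ hε
    refine le_sInf ?_
    rintro _ ⟨τ, hτ, rfl, h1, hd⟩
    obtain ⟨t, ht, htτ, ht1, htd⟩ :=
      exists_admissible_le η c₁ c₂ hw hθ hW hτ hb hb₁ hε h1 hd
    exact le_trans (sInf_le ⟨t, ht, rfl, ht1, htd⟩) (ENNReal.ofReal_le_ofReal htτ)
  exact ⟨fun b₀ b₁ ε₀ ε₁ _ hb hb₁ _ hε => key b₀ b₁ ε₀ ε₁ hb hb₁ hε,
    fun b₀ ε₀ hb _ => key b₀ 1 ε₀ ε₀ hb.2 le_rfl le_rfl⟩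
end

section
/- For all τ ≥ 0 and all b₀, ε₀ ∈ ℝ, b̃(τ, b₀, ε₀) − b̃(τ, 1, 1) = e^{−wτ}·[(b₀ − 1) + (W(ε₀ − 1)/(w+θ))·(e^{(w+θ)τ} − 1)]. Consequently, if T > 0, b₀ ≤ 1 and ε₀ ≤ ρ_T(b₀), then b̃(τ, b₀, ε₀) ≤ b̃(τ, 1, 1) for all τ ∈ [0, T]. -/
/-!
The two values of `btilde` share the terms in `c₁` and `c₂`, so their difference is
`exp (-w τ) * ((b₀ - 1) + s * E τ)` with `s = W (ε₀ - 1) / (w + θ)` and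
`E τ = exp ((w + θ) τ) - 1`. The threshold `ε₀ ≤ ρ_T(b₀)` says precisely that
`s * E T ≤ 1 - b₀`. Since `0 ≤ E τ ≤ E T` on `[0, T]` and `0 ≤ 1 - b₀`, the bound
`s * E τ ≤ 1 - b₀` follows for either sign of `s`.
-/

open Real

/-- The threshold function `ρ_T` of Lemma 2(iii). -/
noncomputable def ρ (w θ W T y : ℝ) : ℝ :=
  (w + θ) * (1 - y) / (W * (Real.exp ((w + θ) * T) - 1)) + 1

/-- Identity and inequality (46) used in the proof of Lemma 2(iii). -/
theorem stmt_9 (w θ η W c₁ c₂ : ℝ) (hw : 0 < w) (hθ : 0 < θ) (hη : 0 < η)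
    (hW : 0 < W) (hc₁ : 0 ≤ c₁) (hc₂ : 0 ≤ c₂) :
    (∀ τ : ℝ, 0 ≤ τ → ∀ b₀ ε₀ : ℝ,
      btilde w θ η W c₁ c₂ τ b₀ ε₀ - btilde w θ η W c₁ c₂ τ 1 1 =
        Real.exp (-w * τ) *
          ((b₀ - 1) + W * (ε₀ - 1) / (w + θ) * (Real.exp ((w + θ) * τ) - 1))) ∧
    ∀ T : ℝ, 0 < T → ∀ b₀ ε₀ : ℝ, b₀ ≤ 1 → ε₀ ≤ ρ w θ W T b₀ →
      ∀ τ ∈ Set.Icc (0 : ℝ) T,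
        btilde w θ η W c₁ c₂ τ b₀ ε₀ ≤ btilde w θ η W c₁ c₂ τ 1 1 := by
  have key : ∀ τ : ℝ, ∀ b₀ ε₀ : ℝ,
      btilde w θ η W c₁ c₂ τ b₀ ε₀ - btilde w θ η W c₁ c₂ τ 1 1 =
        Real.exp (-w * τ) *
          ((b₀ - 1) + W * (ε₀ - 1) / (w + θ) * (Real.exp ((w + θ) * τ) - 1)) := by
    intro τ b₀ ε₀
    rw [neg_mul, Real.exp_neg]
    unfold btilde f₁ f₂
    ring
  refine ⟨fun τ _ => key τ, ?_⟩
  rintro T hT b₀ ε₀ hb hε τ ⟨hτ0, hτT⟩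
  have hwθ : 0 < w + θ := by positivity
  have hK : 0 < Real.exp ((w + θ) * T) - 1 :=
    sub_pos.mpr (Real.one_lt_exp_iff.mpr (by positivity))
  have hE0 : 0 ≤ Real.exp ((w + θ) * τ) - 1 :=
    sub_nonneg.mpr (Real.one_le_exp (by positivity))
  have hEK : Real.exp ((w + θ) * τ) - 1 ≤ Real.exp ((w + θ) * T) - 1 := by
    gcongr
  have hsK : W * (ε₀ - 1) / (w + θ) * (Real.exp ((w + θ) * T) - 1) ≤ 1 - b₀ := by
    have h : ε₀ - 1 ≤ (w + θ) * (1 - b₀) / (W * (Real.exp ((w + θ) * T) - 1)) := by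
      unfold ρ at hε
      linarith
    rw [le_div_iff₀ (by positivity)] at h
    rw [div_mul_eq_mul_div, div_le_iff₀ hwθ]
    linarith
  rw [← sub_nonpos, key]
  refine mul_nonpos_of_nonneg_of_nonpos (Real.exp_pos _).le ?_
  rcases le_total 0 (W * (ε₀ - 1) / (w + θ)) with hs | hs
  · linarith [mul_le_mul_of_nonneg_left hEK hs]
  · linarith [mul_nonpos_of_nonpos_of_nonneg hs hE0]
end

section
/- Let T° > 0, b₀ ∈ [0, 1] and ε₀ > 0. Then: (a) Γ₁(b₀, ε₀) > T° if and only if b̃(T°, b₀, ε₀) < 1; (b) Γ₁(b₀, ε₀) < T° if and only if b̃(T°, b₀, ε₀) > 1; (c) Γ₁(b₀, ε₀) = T° if and only if b̃(T°, b₀, ε₀) = 1. -/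
/-!
Put `g τ = f₁ τ - e^{wτ}`, so that `b̃ - 1 = g e^{-wτ}` has the sign of `g`. Then `g 0 = b₀ - 1 ≤ 0`
and `g' = e^{wτ} h` with `h τ = W ε₀ e^{θτ} + (c₁ - c₂ - w) + c₂ e^{ητ}` strictly increasing
(equivalently, `g` is strictly convex as a function of `e^{wτ}`). At a zero of `g` the derivative of
`b̃` is exactly `h`, so `Γ₁` is the infimum of the set of upcrossings `t ≥ 0`, `g t = 0`, `h t ≥ 0`.

By the mean value theorem, `g > 0` to the right of an upcrossing (`pos_of_gt_upcrossing`), so there is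
at most one upcrossing. Conversely `g T ≥ 0` at some `T > 0` forces `h T > 0` (`slope_pos`), and
`g T > 0` forces an upcrossing in `[0, T)` (`exists_upcrossing`). Hence the sign of `g T` decides on
which side of `T` the upcrossing lies.
-/

open Real ENNReal

section Upcrossing

variable {w : ℝ} {g h : ℝ → ℝ}

/-- The mean value theorem for `g' = e^{wτ} h`, stated up to the positive weight `e^{wτ}`. -/
lemma exists_slope (hg : ∀ x, HasDerivAt g (Real.exp (w * x) * h x) x) {a b : ℝ} (hab : a < b) :
    ∃ ξ ∈ Set.Ioo a b, ∃ k > 0, g b - g a = k * h ξ := by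
  obtain ⟨ξ, hξ, e⟩ := exists_hasDerivAt_eq_slope g (fun x => Real.exp (w * x) * h x) hab
    (fun x _ => (hg x).continuousAt.continuousWithinAt) (fun x _ => hg x)
  have hba : 0 < b - a := sub_pos.2 hab
  refine ⟨ξ, hξ, (b - a) * Real.exp (w * ξ), by positivity, ?_⟩
  rw [eq_div_iff hba.ne'] at e
  linarith

lemma pos_of_gt_upcrossing (hg : ∀ x, HasDerivAt g (Real.exp (w * x) * h x) x) (hh : StrictMono h)
    {t s : ℝ} (h1 : g t = 0) (h2 : 0 ≤ h t) (hts : t < s) : 0 < g s := by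
  obtain ⟨ξ, hξ, k, hk, e⟩ := exists_slope hg hts
  have := mul_pos hk (h2.trans_lt (hh hξ.1))
  linarith

lemma slope_pos (hg : ∀ x, HasDerivAt g (Real.exp (w * x) * h x) x) (hh : StrictMono h)
    (h0 : g 0 ≤ 0) {t : ℝ} (ht : 0 < t) (h1 : 0 ≤ g t) : 0 < h t := by
  obtain ⟨ξ, hξ, k, hk, e⟩ := exists_slope hg ht
  have h3 : 0 ≤ h ξ := nonneg_of_mul_nonneg_right (by linarith : 0 ≤ k * h ξ) hk
  exact h3.trans_lt (hh hξ.2)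

lemma exists_upcrossing_s11 (hg : ∀ x, HasDerivAt g (Real.exp (w * x) * h x) x) (hh : StrictMono h)
    (hc : Continuous h) (h0 : g 0 ≤ 0) {T : ℝ} (hT : 0 < T) (h1 : 0 < g T) :
    ∃ t, 0 ≤ t ∧ t < T ∧ g t = 0 ∧ 0 ≤ h t := by
  have hgc : Continuous g := continuous_iff_continuousAt.2 fun x => (hg x).continuousAt
  by_cases hδ : ∃ δ, 0 < δ ∧ δ < T ∧ g δ ≤ 0
  · obtain ⟨δ, hδ0, hδT, hδg⟩ := hδ
    obtain ⟨t, ht, e⟩ := intermediate_value_Icc hδT.le hgc.continuousOn ⟨hδg, h1.le⟩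
    have ht0 : 0 < t := hδ0.trans_le ht.1
    refine ⟨t, ht0.le, lt_of_le_of_ne ht.2 ?_, e, (slope_pos hg hh h0 ht0 e.ge).le⟩
    rintro rfl
    linarith
  · -- Here `g > 0` on `(0, T)`, so the upcrossing is at `0` itself.
    push Not at hδ
    have hmem : Set.Ioo 0 T ∈ nhdsWithin (0 : ℝ) (Set.Ioi 0) := Ioo_mem_nhdsGT hT
    refine ⟨0, le_rfl, hT, le_antisymm h0 ?_, ?_⟩
    · refine ge_of_tendsto (hgc.continuousAt.continuousWithinAt (s := Set.Ioi 0)) ?_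
      filter_upwards [hmem] with x hx using (hδ x hx.1 hx.2).le
    · refine ge_of_tendsto (hc.continuousAt.continuousWithinAt (s := Set.Ioi 0)) ?_
      filter_upwards [hmem] with x hx using (slope_pos hg hh h0 hx.1 (hδ x hx.1 hx.2).le).le

/-- The infimum of the set of upcrossings compares with `T` as `0` compares with `g T`. -/
lemma sInf_upcrossing_trichotomy (hg : ∀ x, HasDerivAt g (Real.exp (w * x) * h x) x)
    (hh : StrictMono h) (hc : Continuous h) (h0 : g 0 ≤ 0) {T : ℝ} (hT : 0 < T) {G : ℝ≥0∞}
    (hG : G = sInf {x : ℝ≥0∞ | ∃ τ : ℝ, 0 ≤ τ ∧ x = ENNReal.ofReal τ ∧ g τ = 0 ∧ 0 ≤ h τ}) :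
    (g T < 0 → ENNReal.ofReal T < G) ∧ (0 < g T → G < ENNReal.ofReal T) ∧
      (g T = 0 → G = ENNReal.ofReal T) := by
  by_cases hS : ∃ t, 0 ≤ t ∧ g t = 0 ∧ 0 ≤ h t
  · obtain ⟨t, ht, h1, h2⟩ := hS
    have huniq : ∀ s, g s = 0 → 0 ≤ h s → s = t := by
      intro s h3 h4
      rcases lt_trichotomy s t with hst | hst | hst
      · exact absurd h1 (pos_of_gt_upcrossing hg hh h3 h4 hst).ne'
      · exact hst
      · exact absurd h3 (pos_of_gt_upcrossing hg hh h1 h2 hst).ne'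
    have hGt : G = ENNReal.ofReal t := by
      have hset : {x : ℝ≥0∞ | ∃ τ : ℝ, 0 ≤ τ ∧ x = ENNReal.ofReal τ ∧ g τ = 0 ∧ 0 ≤ h τ}
          = {ENNReal.ofReal t} := by
        ext x
        constructor
        · rintro ⟨s, -, rfl, h3, h4⟩
          rw [huniq s h3 h4]
          rfl
        · rintro rfl
          exact ⟨t, ht, rfl, h1, h2⟩
      rw [hG, hset, sInf_singleton]
    rw [hGt]
    refine ⟨fun hn => ?_, fun hp => ?_, fun hz => ?_⟩
    · have hTt : T < t := by
        by_contra! hle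
        rcases hle.eq_or_lt with rfl | hlt
        · linarith
        · linarith [pos_of_gt_upcrossing hg hh h1 h2 hlt]
      exact (ENNReal.ofReal_lt_ofReal_iff (hT.trans hTt)).2 hTt
    · obtain ⟨s, -, hsT, h3, h4⟩ := exists_upcrossing_s11 hg hh hc h0 hT hp
      rw [huniq s h3 h4] at hsT
      exact (ENNReal.ofReal_lt_ofReal_iff hT).2 hsT
    · rw [huniq T hz (slope_pos hg hh h0 hT hz.ge).le]
  · have hGt : G = ⊤ := by
      rw [hG, sInf_eq_top]
      rintro x ⟨t, ht, -, h1, h2⟩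
      exact absurd ⟨t, ht, h1, h2⟩ hS
    rw [hGt]
    refine ⟨fun _ => ENNReal.ofReal_lt_top, fun hp => ?_, fun hz => ?_⟩
    · obtain ⟨s, hs, -, h3, h4⟩ := exists_upcrossing_s11 hg hh hc h0 hT hp
      exact absurd ⟨s, hs, h3, h4⟩ hS
    · exact absurd ⟨T, hT.le, hz, (slope_pos hg hh h0 hT hz.ge).le⟩ hS

end Upcrossing

lemma hasDerivAt_exp_const_mul (a x : ℝ) :
    HasDerivAt (fun s => Real.exp (a * s)) (Real.exp (a * x) * a) x := by
  simpa using ((hasDerivAt_id x).const_mul a).exp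

lemma hasDerivAt_f₁ {w θ η : ℝ} (hw : 0 < w) (hθ : 0 < θ) (hη : 0 < η) (W c₁ c₂ b₀ ε₀ x : ℝ) :
    HasDerivAt (fun s => f₁ w θ η W c₁ c₂ s b₀ ε₀)
      (Real.exp (w * x) *
        (W * ε₀ * Real.exp (θ * x) + (c₁ - c₂) + c₂ * Real.exp (η * x))) x := by
  have h1 := ((hasDerivAt_exp_const_mul (w + θ) x).sub_const 1).const_mul (W * ε₀ / (w + θ))
  have h2 := ((hasDerivAt_exp_const_mul w x).sub_const 1).const_mul ((c₁ - c₂) / w)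
  have h3 := ((hasDerivAt_exp_const_mul (w + η) x).sub_const 1).const_mul (c₂ / (w + η))
  have h4 := ((h1.const_add b₀).add h2).add h3
  refine h4.congr_deriv ?_
  have e1 : w + θ ≠ 0 := by positivity
  have e2 : w + η ≠ 0 := by positivity
  rw [add_mul w θ, add_mul w η, Real.exp_add, Real.exp_add]
  field_simp

/-- At a point where `b̃ = 1`, the quotient rule collapses to `(f₁' - f₂') / f₂`. -/
lemma deriv_btilde_of_eq {w θ η : ℝ} (hw : 0 < w) (hθ : 0 < θ) (hη : 0 < η)
    (W c₁ c₂ b₀ ε₀ x : ℝ) (hx : f₁ w θ η W c₁ c₂ x b₀ ε₀ - Real.exp (w * x) = 0) :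
    deriv (fun s => btilde w θ η W c₁ c₂ s b₀ ε₀) x =
      W * ε₀ * Real.exp (θ * x) + (c₁ - c₂ - w) + c₂ * Real.exp (η * x) := by
  have h1 := (hasDerivAt_f₁ hw hθ hη W c₁ c₂ b₀ ε₀ x).div (hasDerivAt_exp_const_mul w x)
    (Real.exp_pos _).ne'
  have h2 : HasDerivAt (fun s => btilde w θ η W c₁ c₂ s b₀ ε₀) _ x := h1
  rw [h2.deriv, sub_eq_zero.1 hx]
  have := (Real.exp_pos (w * x)).ne'
  field_simp
  ring

/-- Lemma 5: algebraic conditions to check the position of `Γ₁(b₀, ε₀)`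
relative to a time horizon `T°`. -/
theorem stmt_11 (w θ η W c₁ c₂ : ℝ) (hw : 0 < w) (hθ : 0 < θ) (hη : 0 < η)
    (hW : 0 < W) (hc₁ : 0 ≤ c₁) (hc₂ : 0 ≤ c₂)
    (T₀ : ℝ) (hT₀ : 0 < T₀) (b₀ ε₀ : ℝ) (hb₀ : b₀ ∈ Set.Icc (0 : ℝ) 1) (hε₀ : 0 < ε₀) :
    (ENNReal.ofReal T₀ < Γ₁ w θ η W c₁ c₂ b₀ ε₀ ↔ btilde w θ η W c₁ c₂ T₀ b₀ ε₀ < 1) ∧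
    (Γ₁ w θ η W c₁ c₂ b₀ ε₀ < ENNReal.ofReal T₀ ↔ 1 < btilde w θ η W c₁ c₂ T₀ b₀ ε₀) ∧
    (Γ₁ w θ η W c₁ c₂ b₀ ε₀ = ENNReal.ofReal T₀ ↔ btilde w θ η W c₁ c₂ T₀ b₀ ε₀ = 1) := by
  set g : ℝ → ℝ := fun s => f₁ w θ η W c₁ c₂ s b₀ ε₀ - Real.exp (w * s) with hgdef
  set h : ℝ → ℝ := fun x => W * ε₀ * Real.exp (θ * x) + (c₁ - c₂ - w) + c₂ * Real.exp (η * x)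
    with hhdef
  have hg : ∀ x, HasDerivAt g (Real.exp (w * x) * h x) x := fun x =>
    ((hasDerivAt_f₁ hw hθ hη W c₁ c₂ b₀ ε₀ x).sub (hasDerivAt_exp_const_mul w x)).congr_deriv
      (by simp only [hhdef]; ring)
  have hh : StrictMono h := by
    intro x y hxy
    have e1 : W * ε₀ * Real.exp (θ * x) < W * ε₀ * Real.exp (θ * y) := by gcongr
    have e2 : c₂ * Real.exp (η * x) ≤ c₂ * Real.exp (η * y) := by gcongr
    simp only [hhdef]
    linarith
  have hc : Continuous h := by fun_prop
  have h0 : g 0 ≤ 0 := by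
    simp only [hgdef, f₁, mul_zero, Real.exp_zero]
    linarith [hb₀.2]
  have hone : ∀ x, btilde w θ η W c₁ c₂ x b₀ ε₀ = 1 ↔ g x = 0 := fun x => by
    rw [btilde, f₂, div_eq_one_iff_eq (Real.exp_pos _).ne', hgdef, sub_eq_zero]
  have hlt : btilde w θ η W c₁ c₂ T₀ b₀ ε₀ < 1 ↔ g T₀ < 0 := by
    rw [btilde, f₂, div_lt_one (Real.exp_pos _), hgdef, sub_neg]
  have hgt : 1 < btilde w θ η W c₁ c₂ T₀ b₀ ε₀ ↔ 0 < g T₀ := by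
    rw [btilde, f₂, one_lt_div (Real.exp_pos _), hgdef, sub_pos]
  have hG : Γ₁ w θ η W c₁ c₂ b₀ ε₀ =
      sInf {x : ℝ≥0∞ | ∃ τ : ℝ, 0 ≤ τ ∧ x = ENNReal.ofReal τ ∧ g τ = 0 ∧ 0 ≤ h τ} := by
    rw [Γ₁]
    congr 1
    ext x
    refine exists_congr fun τ => and_congr_right fun _ => and_congr_right fun _ => ?_
    rw [hone]
    refine and_congr_right fun hz => ?_
    rw [deriv_btilde_of_eq hw hθ hη W c₁ c₂ b₀ ε₀ τ hz]
  obtain ⟨k1, k2, k3⟩ := sInf_upcrossing_trichotomy hg hh hc h0 hT₀ hG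
  rw [hlt, hgt, hone]
  -- Both sides obey trichotomy, so the three implications are equivalences.
  rcases lt_trichotomy (g T₀) 0 with c | c | c
  · have := k1 c
    simp [c, c.ne, c.not_gt, this, this.ne', this.not_gt]
  · have := k3 c
    simp [c, this]
  · have := k2 c
    simp [c, c.ne', c.not_gt, this, this.ne, this.not_gt]
end

section
/- Let b₀ ∈ ℝ and ε₀ > 0. Then at every τ* > 0 with (∂/∂τ)b̃(τ*, b₀, ε₀) = 0 one has (∂²/∂τ²)b̃(τ*, b₀, ε₀) = W·ε₀·θ·e^{θτ*} + c₂·η·e^{ητ*} > 0; consequently the function τ ↦ b̃(τ, b₀, ε₀) has no local maximum on (0, ∞). -/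
/-! The quotient `b̃ = f₁ / f₂` solves the linear equation
`b̃' = -w b̃ + W ε₀ e^{θτ} + c₁ + c₂ (e^{ητ} - 1)` on all of `ℝ` (`hasDerivAt_btilde`).
Differentiating it once more, the term `-w b̃'` vanishes at a critical point, and what remains is
the positive derivative of the forcing. A local maximum would be a critical point, hence by the
second derivative test also a local minimum; then `b̃` would be locally constant there and its
second derivative would vanish. -/

open Real

theorem hasDerivAt_btilde (w θ η W c₁ c₂ b₀ ε₀ : ℝ) (hw : 0 < w) (hθ : 0 < θ) (hη : 0 < η)
    (τ : ℝ) :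
    HasDerivAt (fun s => btilde w θ η W c₁ c₂ s b₀ ε₀)
      (-w * btilde w θ η W c₁ c₂ τ b₀ ε₀ + W * ε₀ * Real.exp (θ * τ) + c₁ +
        c₂ * (Real.exp (η * τ) - 1)) τ := by
  have hexp : ∀ a : ℝ, HasDerivAt (fun s => Real.exp (a * s)) (Real.exp (a * τ) * a) τ := by
    intro a
    simpa using ((hasDerivAt_id τ).const_mul a).exp
  have hnum := (((((hexp (w + θ)).sub_const 1).const_mul (W * ε₀ / (w + θ))).const_add b₀).add
    (((hexp w).sub_const 1).const_mul ((c₁ - c₂) / w))).add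
    (((hexp (w + η)).sub_const 1).const_mul (c₂ / (w + η)))
  have hquot := hnum.div (hexp w) (Real.exp_ne_zero _)
  refine hquot.congr_deriv ?_
  have hwθ : w + θ ≠ 0 := by positivity
  have hwη : w + η ≠ 0 := by positivity
  have hE := Real.exp_ne_zero (w * τ)
  simp only [btilde, f₁, f₂, Pi.add_apply, add_mul, Real.exp_add]
  field_simp
  ring

theorem not_isLocalMax_of_deriv_deriv_pos {f : ℝ → ℝ} {x : ℝ} (hf : ContinuousAt f x)
    (h2 : 0 < deriv (deriv f) x) : ¬ IsLocalMax f x := by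
  intro hmax
  have hmin := isLocalMin_of_deriv_deriv_pos h2 hmax.deriv_eq_zero hf
  have hconst : f =ᶠ[nhds x] fun _ => f x := by
    filter_upwards [hmax, hmin] with y h₁ h₂ using le_antisymm h₁ h₂
  have h0 : deriv (deriv f) x = 0 := by
    rw [hconst.deriv.deriv_eq]
    simp
  exact h2.ne' h0

/-- Key step in the proof of Lemma 6: at critical points of `b̃` the second
derivative is positive, hence `b̃` has no local maximum on `(0, ∞)`. -/
theorem stmt_12 (w θ η W c₁ c₂ : ℝ) (hw : 0 < w) (hθ : 0 < θ) (hη : 0 < η)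
    (hW : 0 < W) (hc₁ : 0 ≤ c₁) (hc₂ : 0 ≤ c₂) (b₀ ε₀ : ℝ) (hε₀ : 0 < ε₀) :
    (∀ τ : ℝ, 0 < τ → deriv (fun s => btilde w θ η W c₁ c₂ s b₀ ε₀) τ = 0 →
      deriv (deriv (fun s => btilde w θ η W c₁ c₂ s b₀ ε₀)) τ =
          W * ε₀ * θ * Real.exp (θ * τ) + c₂ * η * Real.exp (η * τ) ∧
        0 < deriv (deriv (fun s => btilde w θ η W c₁ c₂ s b₀ ε₀)) τ) ∧
    ∀ τ : ℝ, 0 < τ → ¬ IsLocalMax (fun s => btilde w θ η W c₁ c₂ s b₀ ε₀) τ := by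
  have hd := hasDerivAt_btilde w θ η W c₁ c₂ b₀ ε₀ hw hθ hη
  have hcrit : ∀ τ : ℝ, deriv (fun s => btilde w θ η W c₁ c₂ s b₀ ε₀) τ = 0 →
      deriv (deriv (fun s => btilde w θ η W c₁ c₂ s b₀ ε₀)) τ =
          W * ε₀ * θ * Real.exp (θ * τ) + c₂ * η * Real.exp (η * τ) ∧
        0 < deriv (deriv (fun s => btilde w θ η W c₁ c₂ s b₀ ε₀)) τ := by
    intro τ h0
    have hexp : ∀ a : ℝ, HasDerivAt (fun s => Real.exp (a * s)) (Real.exp (a * τ) * a) τ := by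
      intro a
      simpa using ((hasDerivAt_id τ).const_mul a).exp
    have hb : HasDerivAt (fun s => btilde w θ η W c₁ c₂ s b₀ ε₀) 0 τ :=
      h0 ▸ (hd τ).differentiableAt.hasDerivAt
    have h2 := ((((hb.const_mul (-w)).add ((hexp θ).const_mul (W * ε₀))).add_const c₁).add
      (((hexp η).sub_const 1).const_mul c₂))
    have heq : deriv (deriv (fun s => btilde w θ η W c₁ c₂ s b₀ ε₀)) τ =
        W * ε₀ * θ * Real.exp (θ * τ) + c₂ * η * Real.exp (η * τ) := by
      rw [funext fun s => (hd s).deriv]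
      refine h2.deriv.trans ?_
      ring
    refine ⟨heq, ?_⟩
    rw [heq]
    positivity
  refine ⟨fun τ _ => hcrit τ, fun τ _ hmax => ?_⟩
  exact not_isLocalMax_of_deriv_deriv_pos (hd τ).continuousAt
    (hcrit τ hmax.deriv_eq_zero).2 hmax
end
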